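/- Let s > 2 and let γ : [0,L] → ℝ² (L > 0) be a C² unit-speed curve (‖γ'(t)‖ = 1 for all t) with nowhere-vanishing curvature (γ''(t) ≠ 0 for all t), and let σ be the normalized arc-length measure on its image Γ, i.e. the pushforward by γ of normalized Lebesgue measure on [0,L]. Then there exists N(s,γ) ∈ ℕ such that for every N ≥ N(s,γ) and every finitely supported family (c_k)_{|k|≥N} of complex numbers, (1/2) ∑_{|k|≥N} |c_k|² ≤ ∫_Γ |∑_{|k|≥N} c_k e^{2πi(|k|^s x + k y)}|² dσ(x,y) ≤ (3/2) ∑_{|k|≥N} |c_k|². -/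

import Mathlib

open MeasureTheory Set

open Filter Topology

/-!
Expanding the square, the diagonal terms contribute `L ∑ ‖c k‖²`, and the off-diagonal terms are
weighted by oscillatory integrals `∫ exp (i ⟨ω, γ⟩)` with
`ω = 2π (|k| ^ s - |l| ^ s, k - l)`. Let `u` and `v` be the components of `ω` along the tangent and
the normal of `γ`. The phase has derivative `u`, and `(u, v)` rotates at a speed given by the
curvature: `u' = κ v`, `v' = -κ u`, `u² + v² = |ω|²`. Hence `u` crosses zero fast and is small only
briefly. Integrating by parts with `u / (u² + r²)`, `r = |ω| ^ (1/2)`, in place of `1 / u` bounds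
the integral by `C |ω| ^ (-1/2)` with `C` independent of `ω`.

For `|k|, |l| ≥ N` and `m = |k| - |l| ≠ 0` one has `|ω| ≥ N ^ ((s-2)/2) |m| ^ ((s+2)/2)`, and
`|ω| ≥ N` if `l = -k`. As `s > 2`, the exponent `(s+2)/4` of `|m|` in `|ω| ^ (-1/2)` exceeds `1`
while the power of `N` decays, so the row sums of the off-diagonal matrix tend to `0` as `N → ∞`,
and Schur's test bounds its quadratic form by a small multiple of `∑ ‖c k‖²`.
-/

section RegularizedInverse

/-- The Lorentzian bump `r² / (x² + r²)`: a smooth cutoff to the region `|x| ≲ r`, here the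
region where a phase of derivative `x` is nearly stationary. -/
noncomputable def lorentzian (r x : ℝ) : ℝ := r ^ 2 / (x ^ 2 + r ^ 2)

/-- A smooth substitute `x / (x² + r²)` for `1 / x`, accurate for `|x| ≫ r`. -/
noncomputable def regularizedInv (r x : ℝ) : ℝ := x / (x ^ 2 + r ^ 2)

variable {r : ℝ}

lemma lorentzian_nonneg (r x : ℝ) : 0 ≤ lorentzian r x := by
  unfold lorentzian; positivity

lemma continuous_lorentzian (hr : 0 < r) : Continuous (lorentzian r) :=
  continuous_const.div (by fun_prop) fun x => by positivity

lemma one_sub_mul_regularizedInv (hr : 0 < r) (x : ℝ) :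
    1 - x * regularizedInv r x = lorentzian r x := by
  unfold regularizedInv lorentzian; field_simp; ring

lemma abs_regularizedInv_le (hr : 0 < r) (x : ℝ) : |regularizedInv r x| ≤ 1 / (2 * r) := by
  have hden : 0 < x ^ 2 + r ^ 2 := by positivity
  rw [regularizedInv, abs_div, abs_of_pos hden, div_le_div_iff₀ hden (by positivity)]
  nlinarith [sq_nonneg (|x| - r), sq_abs x]

lemma hasDerivAt_regularizedInv (hr : 0 < r) (x : ℝ) :
    HasDerivAt (regularizedInv r) ((r ^ 2 - x ^ 2) / (x ^ 2 + r ^ 2) ^ 2) x := by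
  have hden : x ^ 2 + r ^ 2 ≠ 0 := by positivity
  refine ((hasDerivAt_id' x).div ((hasDerivAt_pow 2 x).add_const (r ^ 2)) hden).congr_deriv ?_
  push_cast
  ring

lemma continuous_deriv_regularizedInv (hr : 0 < r) :
    Continuous fun x : ℝ => (r ^ 2 - x ^ 2) / (x ^ 2 + r ^ 2) ^ 2 :=
  Continuous.div (by fun_prop) (by fun_prop) fun x => by positivity

lemma abs_deriv_regularizedInv_le (hr : 0 < r) (x : ℝ) :
    |(r ^ 2 - x ^ 2) / (x ^ 2 + r ^ 2) ^ 2| ≤ lorentzian r x / r ^ 2 := by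
  have hden : 0 < x ^ 2 + r ^ 2 := by positivity
  have hnum : |r ^ 2 - x ^ 2| ≤ x ^ 2 + r ^ 2 := by
    rw [abs_le]; constructor <;> nlinarith [sq_nonneg r, sq_nonneg x]
  calc |(r ^ 2 - x ^ 2) / (x ^ 2 + r ^ 2) ^ 2|
      = |r ^ 2 - x ^ 2| / (x ^ 2 + r ^ 2) ^ 2 := by rw [abs_div, abs_pow, abs_of_pos hden]
    _ ≤ (x ^ 2 + r ^ 2) / (x ^ 2 + r ^ 2) ^ 2 := by gcongr
    _ = lorentzian r x / r ^ 2 := by unfold lorentzian; field_simp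

lemma abs_one_sub_mul_regularizedInv_add_le (hr : 0 < r) {k₀ k x y : ℝ} (hk₀ : 0 < k₀)
    (hk : k₀ ≤ k) (hy : |y| ≤ r ^ 2) :
    |1 - x * regularizedInv r x| + |(r ^ 2 - x ^ 2) / (x ^ 2 + r ^ 2) ^ 2 * (k * y)| ≤
      (1 / k₀ + 1) * (k * lorentzian r x) := by
  have hkpos : 0 < k := hk₀.trans_le hk
  have hw := lorentzian_nonneg r x
  have hderiv : |(r ^ 2 - x ^ 2) / (x ^ 2 + r ^ 2) ^ 2 * (k * y)| ≤ k * lorentzian r x := by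
    calc |(r ^ 2 - x ^ 2) / (x ^ 2 + r ^ 2) ^ 2 * (k * y)|
        = |(r ^ 2 - x ^ 2) / (x ^ 2 + r ^ 2) ^ 2| * (k * |y|) := by
          rw [abs_mul, abs_mul, abs_of_pos hkpos]
      _ ≤ lorentzian r x / r ^ 2 * (k * r ^ 2) := by
          gcongr
          exact abs_deriv_regularizedInv_le hr x
      _ = k * lorentzian r x := by field_simp
  have hcutoff : lorentzian r x ≤ 1 / k₀ * (k * lorentzian r x) := by
    rw [one_div, ← div_eq_inv_mul, le_div_iff₀ hk₀, mul_comm]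
    exact mul_le_mul_of_nonneg_right hk hw
  rw [one_sub_mul_regularizedInv hr, abs_of_nonneg hw]
  linarith

end RegularizedInverse

section IntegrationByParts

variable {φ u g g' : ℝ → ℝ} {a b : ℝ}

-- Integrate by parts in `∫ e^{iφ} u g`; with `g ≈ 1 / u` the remainder `1 - u g` is small.
lemma norm_integral_cexp_mul_I_le (hab : a ≤ b)
    (hφ : ContinuousOn φ (Icc a b)) (hu : ContinuousOn u (Icc a b))
    (hg : ContinuousOn g (Icc a b)) (hg' : ContinuousOn g' (Icc a b))
    (hφu : ∀ t ∈ Ioo a b, HasDerivAt φ (u t) t) (hgg' : ∀ t ∈ Ioo a b, HasDerivAt g (g' t) t) :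
    ‖∫ t in a..b, Complex.exp (φ t * Complex.I)‖ ≤
      |g a| + |g b| + ∫ t in a..b, (|1 - u t * g t| + |g' t|) := by
  set E : ℝ → ℂ := fun t => Complex.exp (φ t * Complex.I)
  set G : ℝ → ℂ := fun t => -Complex.I * (E t * g t)
  set H : ℝ → ℂ := fun t => E t * ((1 - u t * g t : ℝ) + Complex.I * g' t)
  have hE : ContinuousOn E (Icc a b) := by fun_prop
  have hG : ContinuousOn G (Icc a b) := by fun_prop
  have hH : ContinuousOn H (Icc a b) := by fun_prop
  have hGEH : ∀ t ∈ Ioo a b, HasDerivAt G (E t - H t) t := fun t ht => by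
    have hEt : HasDerivAt E (E t * (u t * Complex.I)) t :=
      ((hφu t ht).ofReal_comp.mul_const Complex.I).cexp
    refine ((hEt.mul (hgg' t ht).ofReal_comp).const_mul (-Complex.I)).congr_deriv ?_
    simp only [H]
    push_cast
    linear_combination -(E t * u t * g t) * Complex.I_sq
  have hEi := hE.intervalIntegrable_of_Icc (μ := volume) hab
  have hHi := hH.intervalIntegrable_of_Icc (μ := volume) hab
  have hparts : ∫ t in a..b, E t = G b - G a + ∫ t in a..b, H t := by
    rw [← intervalIntegral.integral_eq_sub_of_hasDerivAt_of_le hab hG hGEH (hEi.sub hHi),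
      intervalIntegral.integral_sub hEi hHi, sub_add_cancel]
  have hnormE : ∀ t, ‖E t‖ = 1 := fun t => Complex.norm_exp_ofReal_mul_I _
  have hnormG : ∀ t, ‖G t‖ = |g t| := fun t => by simp [G, hnormE]
  have hnormH : ∀ t, ‖H t‖ ≤ |1 - u t * g t| + |g' t| := fun t => by
    simp only [H, norm_mul, hnormE, one_mul]
    refine (norm_add_le _ _).trans_eq ?_
    rw [norm_mul, Complex.norm_I, one_mul, Complex.norm_real, Complex.norm_real,
      Real.norm_eq_abs, Real.norm_eq_abs]
  have hbound : IntervalIntegrable (fun t => |1 - u t * g t| + |g' t|) volume a b :=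
    ContinuousOn.intervalIntegrable_of_Icc hab (by fun_prop)
  calc ‖∫ t in a..b, E t‖ ≤ ‖G b - G a‖ + ‖∫ t in a..b, H t‖ := hparts ▸ norm_add_le _ _
    _ ≤ (|g b| + |g a|) + ∫ t in a..b, (|1 - u t * g t| + |g' t|) := by
        refine add_le_add ((norm_sub_le _ _).trans_eq (by simp only [hnormG])) ?_
        exact intervalIntegral.norm_integral_le_of_norm_le hab (.of_forall fun t _ => hnormH t)
          hbound
    _ = |g a| + |g b| + ∫ t in a..b, (|1 - u t * g t| + |g' t|) := by ring

end IntegrationByParts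

section RotatingPair

lemma abs_arctan_le_two (x : ℝ) : |Real.arctan x| ≤ 2 := by
  rw [abs_le]
  constructor <;>
    linarith [Real.arctan_lt_pi_div_two x, Real.neg_pi_div_two_lt_arctan x, Real.pi_lt_four]

lemma abs_mul_arctan_le {x y M : ℝ} (hx : x ^ 2 ≤ M ^ 2) (hM : 0 ≤ M) :
    |x * Real.arctan y| ≤ 2 * M := by
  rw [abs_mul, mul_comm]
  exact mul_le_mul (abs_arctan_le_two y) (abs_le_of_sq_le_sq hx hM) (abs_nonneg _) zero_le_two

lemma pow_three_mul_lorentzian_le {k x r : ℝ} (hk : 0 ≤ k) (hr : 1 ≤ r)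
    (hx : x ^ 2 ≤ (r ^ 2) ^ 2) :
    r ^ 3 * (k * lorentzian r x) ≤
      k * ((r ^ 3 + r) * lorentzian r x - r - x * Real.arctan (x / r)) + 3 * r ^ 2 * k := by
  have harctan : x * Real.arctan (x / r) ≤ 2 * r ^ 2 :=
    (le_abs_self _).trans (abs_mul_arctan_le hx (by positivity))
  have hlower : k * (r + x * Real.arctan (x / r)) ≤ k * (3 * r ^ 2) :=
    mul_le_mul_of_nonneg_left (by nlinarith) hk
  nlinarith [mul_nonneg hk (lorentzian_nonneg r x)]

/-- The pair `(u, v)` rotates with angular velocity `-κ` on `[a, b]`: `u' = κ v`, `v' = -κ u`.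
These are the equations satisfied by the components, along tangent and normal, of a fixed
vector with respect to the Frenet frame of a plane curve of signed curvature `κ`. Derivatives are
required only inside the interval. -/
structure IsRotatingPair (κ u v : ℝ → ℝ) (a b : ℝ) : Prop where
  continuousOn_fst : ContinuousOn u (Icc a b)
  continuousOn_snd : ContinuousOn v (Icc a b)
  hasDerivAt_fst : ∀ t ∈ Ioo a b, HasDerivAt u (κ t * v t) t
  hasDerivAt_snd : ∀ t ∈ Ioo a b, HasDerivAt v (-(κ t * u t)) t

namespace IsRotatingPair

variable {κ u v φ : ℝ → ℝ} {a b r : ℝ}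

lemma neg (h : IsRotatingPair κ u v a b) : IsRotatingPair (-κ) u (-v) a b where
  continuousOn_fst := h.continuousOn_fst
  continuousOn_snd := h.continuousOn_snd.neg
  hasDerivAt_fst t ht := (h.hasDerivAt_fst t ht).congr_deriv (by simp)
  hasDerivAt_snd t ht := (h.hasDerivAt_snd t ht).neg.congr_deriv (by simp)

lemma rotate (h : IsRotatingPair κ u v a b) (x y : ℝ) :
    IsRotatingPair κ (fun t => x * v t + y * u t) (fun t => y * v t - x * u t) a b where
  continuousOn_fst :=
    (continuousOn_const.mul h.continuousOn_snd).add (continuousOn_const.mul h.continuousOn_fst)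
  continuousOn_snd :=
    (continuousOn_const.mul h.continuousOn_snd).sub (continuousOn_const.mul h.continuousOn_fst)
  hasDerivAt_fst t ht :=
    (((h.hasDerivAt_snd t ht).const_mul x).add ((h.hasDerivAt_fst t ht).const_mul y)).congr_deriv
      (by ring)
  hasDerivAt_snd t ht :=
    (((h.hasDerivAt_snd t ht).const_mul y).sub ((h.hasDerivAt_fst t ht).const_mul x)).congr_deriv
      (by ring)

lemma hasDerivAt_mul_arctan (h : IsRotatingPair κ u v a b) (hr : 0 < r)
    (hnorm : ∀ t ∈ Icc a b, u t ^ 2 + v t ^ 2 = r ^ 4) {t : ℝ} (ht : t ∈ Ioo a b) :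
    HasDerivAt (fun t => v t * Real.arctan (u t / r))
      (κ t * ((r ^ 3 + r) * lorentzian r (u t) - r - u t * Real.arctan (u t / r))) t := by
  refine ((h.hasDerivAt_snd t ht).mul
    ((h.hasDerivAt_fst t ht).div_const r).arctan).congr_deriv ?_
  have hv : v t ^ 2 = r ^ 4 - u t ^ 2 := by
    linarith [hnorm t (Ioo_subset_Icc_self ht)]
  have hden : u t ^ 2 + r ^ 2 ≠ 0 := by positivity
  have hmain : v t * (1 / (1 + (u t / r) ^ 2) * (κ t * v t / r)) =
      κ t * ((r ^ 3 + r) * lorentzian r (u t) - r) := by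
    calc v t * (1 / (1 + (u t / r) ^ 2) * (κ t * v t / r))
        = κ t * (v t ^ 2 * (r / (u t ^ 2 + r ^ 2))) := by field_simp; ring
      _ = κ t * ((r ^ 3 + r) * lorentzian r (u t) - r) := by
          rw [hv, lorentzian]; field_simp; ring
  rw [hmain]
  ring

-- `κ * lorentzian r u` is, up to lower order terms, the derivative of `v * arctan (u / r) / r ^ 3`.
lemma integral_curvature_mul_lorentzian_le (h : IsRotatingPair κ u v a b) (hab : a ≤ b)
    (hκ : ContinuousOn κ (Icc a b)) (hκ0 : ∀ t ∈ Icc a b, 0 ≤ κ t) (hr : 1 ≤ r)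
    (hnorm : ∀ t ∈ Icc a b, u t ^ 2 + v t ^ 2 = r ^ 4) :
    ∫ t in a..b, κ t * lorentzian r (u t) ≤ (4 + 3 * ∫ t in a..b, κ t) / r := by
  have hr0 : 0 < r := by linarith
  have hu := h.continuousOn_fst
  have hv := h.continuousOn_snd
  set F : ℝ → ℝ := fun t => v t * Real.arctan (u t / r)
  set F' : ℝ → ℝ := fun t =>
    κ t * ((r ^ 3 + r) * lorentzian r (u t) - r - u t * Real.arctan (u t / r))
  have hw : ContinuousOn (fun t => lorentzian r (u t)) (Icc a b) :=
    (continuous_lorentzian hr0).comp_continuousOn hu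
  have harctan : ContinuousOn (fun t => Real.arctan (u t / r)) (Icc a b) :=
    Real.continuous_arctan.comp_continuousOn (hu.div_const r)
  have hF : ContinuousOn F (Icc a b) := hv.mul harctan
  have hF' : IntervalIntegrable F' volume a b :=
    ContinuousOn.intervalIntegrable_of_Icc hab (by fun_prop)
  have hκi : IntervalIntegrable κ volume a b := hκ.intervalIntegrable_of_Icc hab
  have hpointwise : ∀ t ∈ Icc a b,
      r ^ 3 * (κ t * lorentzian r (u t)) ≤ F' t + 3 * r ^ 2 * κ t := fun t ht =>
    pow_three_mul_lorentzian_le (hκ0 t ht) hr (by nlinarith [hnorm t ht, sq_nonneg (v t)])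
  have hFle : ∀ t ∈ Icc a b, |F t| ≤ 2 * r ^ 2 := fun t ht =>
    abs_mul_arctan_le (by nlinarith [hnorm t ht, sq_nonneg (u t)]) (by positivity)
  have hmain : r ^ 3 * ∫ t in a..b, κ t * lorentzian r (u t) ≤
      (4 + 3 * ∫ t in a..b, κ t) * r ^ 2 := by
    calc r ^ 3 * ∫ t in a..b, κ t * lorentzian r (u t)
        = ∫ t in a..b, r ^ 3 * (κ t * lorentzian r (u t)) := by
          rw [intervalIntegral.integral_const_mul]
      _ ≤ ∫ t in a..b, (F' t + 3 * r ^ 2 * κ t) :=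
          intervalIntegral.integral_mono_on hab
            (((hκ.mul hw).intervalIntegrable_of_Icc hab).const_mul _)
            (hF'.add (hκi.const_mul _)) hpointwise
      _ = (F b - F a) + 3 * r ^ 2 * ∫ t in a..b, κ t := by
          rw [intervalIntegral.integral_add hF' (hκi.const_mul _),
            intervalIntegral.integral_const_mul,
            intervalIntegral.integral_eq_sub_of_hasDerivAt_of_le hab hF
              (fun t ht => h.hasDerivAt_mul_arctan hr0 hnorm ht) hF']
      _ ≤ (4 + 3 * ∫ t in a..b, κ t) * r ^ 2 := by
          linarith [abs_le.1 (hFle a ⟨le_rfl, hab⟩), abs_le.1 (hFle b ⟨hab, le_rfl⟩)]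
  rw [le_div_iff₀ hr0]
  refine le_of_mul_le_mul_right (hmain.trans' (le_of_eq ?_)) (by positivity : 0 < r ^ 2)
  ring

lemma norm_integral_cexp_le_of_le_curvature (h : IsRotatingPair κ u v a b) (hab : a ≤ b)
    (hκ : ContinuousOn κ (Icc a b)) {κ₀ : ℝ} (hκ₀ : 0 < κ₀) (hκ₀κ : ∀ t ∈ Icc a b, κ₀ ≤ κ t)
    (hr : 1 ≤ r) (hnorm : ∀ t ∈ Icc a b, u t ^ 2 + v t ^ 2 = r ^ 4)
    (hφ : ContinuousOn φ (Icc a b)) (hφu : ∀ t ∈ Ioo a b, HasDerivAt φ (u t) t) :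
    ‖∫ t in a..b, Complex.exp (φ t * Complex.I)‖ ≤
      (1 + (1 / κ₀ + 1) * (4 + 3 * ∫ t in a..b, κ t)) / r := by
  have hr0 : 0 < r := by linarith
  have hu := h.continuousOn_fst
  have hv := h.continuousOn_snd
  set g' : ℝ → ℝ := fun t => (r ^ 2 - u t ^ 2) / (u t ^ 2 + r ^ 2) ^ 2 * (κ t * v t)
  have hg : ContinuousOn (fun t => regularizedInv r (u t)) (Icc a b) := fun t ht =>
    (hasDerivAt_regularizedInv hr0 (u t)).continuousAt.comp_continuousWithinAt (hu t ht)
  have hg' : ContinuousOn g' (Icc a b) :=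
    ((continuous_deriv_regularizedInv hr0).comp_continuousOn hu).mul (hκ.mul hv)
  have hw : ContinuousOn (fun t => lorentzian r (u t)) (Icc a b) :=
    (continuous_lorentzian hr0).comp_continuousOn hu
  have hremainder : ∀ t ∈ Icc a b, |1 - u t * regularizedInv r (u t)| + |g' t| ≤
      (1 / κ₀ + 1) * (κ t * lorentzian r (u t)) := fun t ht =>
    abs_one_sub_mul_regularizedInv_add_le hr0 hκ₀ (hκ₀κ t ht)
      (abs_le_of_sq_le_sq (by nlinarith [hnorm t ht, sq_nonneg (u t)]) (by positivity))
  calc ‖∫ t in a..b, Complex.exp (φ t * Complex.I)‖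
      ≤ |regularizedInv r (u a)| + |regularizedInv r (u b)| +
          ∫ t in a..b, (|1 - u t * regularizedInv r (u t)| + |g' t|) :=
        norm_integral_cexp_mul_I_le hab hφ hu hg hg' hφu fun t ht =>
          (hasDerivAt_regularizedInv hr0 (u t)).comp t (h.hasDerivAt_fst t ht)
    _ ≤ 1 / (2 * r) + 1 / (2 * r) +
          ∫ t in a..b, (1 / κ₀ + 1) * (κ t * lorentzian r (u t)) := by
        gcongr
        · exact abs_regularizedInv_le hr0 _
        · exact abs_regularizedInv_le hr0 _
        · refine intervalIntegral.integral_mono_on hab ?_ ?_ hremainder <;>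
            exact ContinuousOn.intervalIntegrable_of_Icc hab (by fun_prop)
    _ ≤ 1 / (2 * r) + 1 / (2 * r) +
          (1 / κ₀ + 1) * ((4 + 3 * ∫ t in a..b, κ t) / r) := by
        rw [intervalIntegral.integral_const_mul]
        gcongr
        exact h.integral_curvature_mul_lorentzian_le hab hκ
          (fun t ht => hκ₀.le.trans (hκ₀κ t ht)) hr hnorm
    _ = (1 + (1 / κ₀ + 1) * (4 + 3 * ∫ t in a..b, κ t)) / r := by field_simp; ring

lemma exists_forall_norm_integral_cexp_le_of_pos (hab : a ≤ b) (hκ : ContinuousOn κ (Icc a b))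
    (hκ0 : ∀ t ∈ Icc a b, 0 < κ t) :
    ∃ C > 0, ∀ (u v φ : ℝ → ℝ) (R : ℝ), 1 ≤ R → IsRotatingPair κ u v a b →
      (∀ t ∈ Icc a b, u t ^ 2 + v t ^ 2 = R ^ 2) → ContinuousOn φ (Icc a b) →
      (∀ t ∈ Ioo a b, HasDerivAt φ (u t) t) →
        ‖∫ t in a..b, Complex.exp (φ t * Complex.I)‖ ≤ C * R ^ (-(1 / 2) : ℝ) := by
  obtain ⟨t₀, ht₀, hmin⟩ := isCompact_Icc.exists_isMinOn (nonempty_Icc.2 hab) hκ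
  have htotal : 0 ≤ ∫ t in a..b, κ t :=
    intervalIntegral.integral_nonneg hab fun t ht => (hκ0 t ht).le
  have hκ₀ : 0 < κ t₀ := hκ0 t₀ ht₀
  refine ⟨1 + (1 / κ t₀ + 1) * (4 + 3 * ∫ t in a..b, κ t), by positivity, ?_⟩
  intro u v φ R hR h hnorm hφ hφu
  have hR0 : 0 ≤ R := by linarith
  have hsqrt : √R ^ 4 = R ^ 2 := by rw [← Real.sq_sqrt hR0, Real.sqrt_sq (by positivity)]; ring
  have hdecay := h.norm_integral_cexp_le_of_le_curvature hab hκ hκ₀ (fun t ht => hmin ht)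
    (Real.one_le_sqrt.2 hR) (fun t ht => (hnorm t ht).trans hsqrt.symm) hφ hφu
  rwa [div_eq_mul_inv, Real.sqrt_eq_rpow, ← Real.rpow_neg hR0] at hdecay

lemma exists_forall_norm_integral_cexp_le (hab : a ≤ b) (hκ : ContinuousOn κ (Icc a b))
    (hκ0 : ∀ t ∈ Icc a b, κ t ≠ 0) :
    ∃ C > 0, ∀ (u v φ : ℝ → ℝ) (R : ℝ), 1 ≤ R → IsRotatingPair κ u v a b →
      (∀ t ∈ Icc a b, u t ^ 2 + v t ^ 2 = R ^ 2) → ContinuousOn φ (Icc a b) →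
      (∀ t ∈ Ioo a b, HasDerivAt φ (u t) t) →
        ‖∫ t in a..b, Complex.exp (φ t * Complex.I)‖ ≤ C * R ^ (-(1 / 2) : ℝ) := by
  by_cases hpos : ∀ t ∈ Icc a b, 0 < κ t
  · exact exists_forall_norm_integral_cexp_le_of_pos hab hκ hpos
  · push Not at hpos
    obtain ⟨t₀, ht₀, hκt₀⟩ := hpos
    have hneg : ∀ t ∈ Icc a b, 0 < (-κ) t := fun t ht => by
      by_contra hcon
      have hκt : 0 ≤ κ t := by simpa using hcon
      obtain ⟨z, hz, hκz⟩ := isPreconnected_Icc.intermediate_value ht₀ ht hκ ⟨hκt₀, hκt⟩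
      exact hκ0 z hz hκz
    obtain ⟨C, hC, hdecay⟩ := exists_forall_norm_integral_cexp_le_of_pos hab hκ.neg hneg
    exact ⟨C, hC, fun u v φ R hR h hnorm => hdecay u (-v) φ R hR h.neg (by simpa using hnorm)⟩

end IsRotatingPair

end RotatingPair

section PlaneCurve

variable {a b : ℝ} {f γ₁ γ₂ : ℝ → ℝ}

lemma derivWithin_eqOn_deriv_Ioo (f : ℝ → ℝ) (a b : ℝ) :
    EqOn (derivWithin f (Icc a b)) (deriv f) (Ioo a b) := fun _ ht =>
  derivWithin_of_mem_nhds (Icc_mem_nhds ht.1 ht.2)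

lemma hasDerivAt_of_contDiffOn_Icc {n : WithTop ℕ∞} (hf : ContDiffOn ℝ n f (Icc a b)) (hn : n ≠ 0)
    {t : ℝ} (ht : t ∈ Ioo a b) : HasDerivAt f (derivWithin f (Icc a b) t) t :=
  (hf.differentiableOn hn t (Ioo_subset_Icc_self ht)).hasDerivWithinAt.hasDerivAt
    (Icc_mem_nhds ht.1 ht.2)

lemma contDiffOn_derivWithin_Icc (hab : a < b) (hf : ContDiffOn ℝ 2 f (Icc a b)) :
    ContDiffOn ℝ 1 (derivWithin f (Icc a b)) (Icc a b) :=
  hf.derivWithin (uniqueDiffOn_Icc hab) (by norm_num)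

-- At an endpoint `deriv f` also sees `f` outside `[a, b]`, but if it is differentiable there then
-- it is the continuous extension of `f'` from the interior.
lemma derivWithin_derivWithin_eq_deriv_deriv (hab : a < b) (hf : ContDiffOn ℝ 2 f (Icc a b))
    {t : ℝ} (ht : t ∈ Icc a b) (hd : DifferentiableAt ℝ (deriv f) t) :
    derivWithin (derivWithin f (Icc a b)) (Icc a b) t = deriv (deriv f) t := by
  set p := derivWithin f (Icc a b)
  have hp : ContDiffOn ℝ 1 p (Icc a b) := contDiffOn_derivWithin_Icc hab hf
  have heq : EqOn (deriv f) p (Ioo a b) := (derivWithin_eqOn_deriv_Ioo f a b).symm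
  have hclosure : t ∈ closure (Ioo a b) := by rwa [closure_Ioo hab.ne]
  have : (𝓝[Ioo a b] t).NeBot := mem_closure_iff_nhdsWithin_neBot.1 hclosure
  have hpt : p t = deriv f t := by
    have hp_tendsto : Tendsto p (𝓝[Ioo a b] t) (𝓝 (p t)) :=
      (hp.continuousOn t ht).mono Ioo_subset_Icc_self
    exact tendsto_nhds_unique_of_eventuallyEq hp_tendsto hd.continuousAt.continuousWithinAt
      heq.symm.eventuallyEq_nhdsWithin
  have hderiv : HasDerivWithinAt p (deriv (deriv f) t) (Ioo a b) t :=
    hd.hasDerivAt.hasDerivWithinAt.congr heq.symm hpt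
  have hderivWithin : HasDerivWithinAt p (derivWithin p (Icc a b) t) (Ioo a b) t :=
    (hp.differentiableOn one_ne_zero t ht).hasDerivWithinAt.mono Ioo_subset_Icc_self
  exact (uniqueDiffWithinAt_convex (convex_Ioo a b) (by simp [hab]) hclosure).eq_deriv _
    hderivWithin hderiv

/-- The signed curvature `γ₁' γ₂'' - γ₂' γ₁''` of a unit-speed plane curve `(γ₁, γ₂)` on the
interval `[a, b]`. Derivatives are one-sided at the endpoints. -/
noncomputable def signedCurvature (γ₁ γ₂ : ℝ → ℝ) (a b t : ℝ) : ℝ :=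
  derivWithin γ₁ (Icc a b) t * derivWithin (derivWithin γ₂ (Icc a b)) (Icc a b) t -
    derivWithin γ₂ (Icc a b) t * derivWithin (derivWithin γ₁ (Icc a b)) (Icc a b) t

lemma continuousOn_signedCurvature (hab : a < b) (hγ₁ : ContDiffOn ℝ 2 γ₁ (Icc a b))
    (hγ₂ : ContDiffOn ℝ 2 γ₂ (Icc a b)) :
    ContinuousOn (signedCurvature γ₁ γ₂ a b) (Icc a b) := by
  have hT₁ := contDiffOn_derivWithin_Icc hab hγ₁
  have hT₂ := contDiffOn_derivWithin_Icc hab hγ₂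
  have hU := uniqueDiffOn_Icc hab
  exact (hT₁.continuousOn.mul (hT₂.continuousOn_derivWithin hU le_rfl)).sub
    (hT₂.continuousOn.mul (hT₁.continuousOn_derivWithin hU le_rfl))

lemma derivWithin_sq_add_sq_eq_one (hab : a < b) (hγ₁ : ContDiffOn ℝ 1 γ₁ (Icc a b))
    (hγ₂ : ContDiffOn ℝ 1 γ₂ (Icc a b))
    (hspeed : ∀ t ∈ Ioo a b, deriv γ₁ t ^ 2 + deriv γ₂ t ^ 2 = 1) :
    ∀ t ∈ Icc a b, derivWithin γ₁ (Icc a b) t ^ 2 + derivWithin γ₂ (Icc a b) t ^ 2 = 1 := by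
  have hinterior : EqOn (fun t => derivWithin γ₁ (Icc a b) t ^ 2 + derivWithin γ₂ (Icc a b) t ^ 2)
      (fun _ => 1) (Ioo a b) := fun t ht => by
    simp only [derivWithin_eqOn_deriv_Ioo _ a b ht, hspeed t ht]
  exact hinterior.of_subset_closure
    (((hγ₁.continuousOn_derivWithin (uniqueDiffOn_Icc hab) le_rfl).pow 2).add
      ((hγ₂.continuousOn_derivWithin (uniqueDiffOn_Icc hab) le_rfl).pow 2))
    continuousOn_const Ioo_subset_Icc_self (closure_Ioo hab.ne).ge

lemma derivWithin_derivWithin_eq_signedCurvature_mul (hab : a < b)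
    (hγ₁ : ContDiffOn ℝ 2 γ₁ (Icc a b)) (hγ₂ : ContDiffOn ℝ 2 γ₂ (Icc a b))
    (hspeed : ∀ t ∈ Icc a b, derivWithin γ₁ (Icc a b) t ^ 2 + derivWithin γ₂ (Icc a b) t ^ 2 = 1)
    {t : ℝ} (ht : t ∈ Icc a b) :
    derivWithin (derivWithin γ₁ (Icc a b)) (Icc a b) t =
        -(signedCurvature γ₁ γ₂ a b t * derivWithin γ₂ (Icc a b) t) ∧
      derivWithin (derivWithin γ₂ (Icc a b)) (Icc a b) t =
        signedCurvature γ₁ γ₂ a b t * derivWithin γ₁ (Icc a b) t := by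
  unfold signedCurvature
  set T₁ := derivWithin γ₁ (Icc a b)
  set T₂ := derivWithin γ₂ (Icc a b)
  have hT₁ := ((contDiffOn_derivWithin_Icc hab hγ₁).differentiableOn
    one_ne_zero t ht).hasDerivWithinAt
  have hT₂ := ((contDiffOn_derivWithin_Icc hab hγ₂).differentiableOn
    one_ne_zero t ht).hasDerivWithinAt
  have horthogonal :
      T₁ t * derivWithin T₁ (Icc a b) t + T₂ t * derivWithin T₂ (Icc a b) t = 0 := by
    have hconst : HasDerivWithinAt (T₁ ^ 2 + T₂ ^ 2) 0 (Icc a b) t :=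
      (hasDerivWithinAt_const t _ (1 : ℝ)).congr hspeed (hspeed t ht)
    have hzero := (uniqueDiffOn_Icc hab t ht).eq_deriv _ ((hT₁.pow 2).add (hT₂.pow 2)) hconst
    norm_num at hzero
    linarith
  constructor
  · linear_combination (-derivWithin T₁ (Icc a b) t) * hspeed t ht + T₁ t * horthogonal
  · linear_combination (-derivWithin T₂ (Icc a b) t) * hspeed t ht + T₂ t * horthogonal

lemma isRotatingPair_derivWithin (hab : a < b) (hγ₁ : ContDiffOn ℝ 2 γ₁ (Icc a b))
    (hγ₂ : ContDiffOn ℝ 2 γ₂ (Icc a b))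
    (hspeed : ∀ t ∈ Icc a b, derivWithin γ₁ (Icc a b) t ^ 2 + derivWithin γ₂ (Icc a b) t ^ 2 = 1) :
    IsRotatingPair (signedCurvature γ₁ γ₂ a b) (derivWithin γ₂ (Icc a b))
      (derivWithin γ₁ (Icc a b)) a b where
  continuousOn_fst := (contDiffOn_derivWithin_Icc hab hγ₂).continuousOn
  continuousOn_snd := (contDiffOn_derivWithin_Icc hab hγ₁).continuousOn
  hasDerivAt_fst _ ht :=
    (hasDerivAt_of_contDiffOn_Icc (contDiffOn_derivWithin_Icc hab hγ₂) one_ne_zero ht).congr_deriv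
      (derivWithin_derivWithin_eq_signedCurvature_mul hab hγ₁ hγ₂ hspeed
        (Ioo_subset_Icc_self ht)).2
  hasDerivAt_snd _ ht :=
    (hasDerivAt_of_contDiffOn_Icc (contDiffOn_derivWithin_Icc hab hγ₁) one_ne_zero ht).congr_deriv
      (derivWithin_derivWithin_eq_signedCurvature_mul hab hγ₁ hγ₂ hspeed
        (Ioo_subset_Icc_self ht)).1

lemma signedCurvature_ne_zero (hab : a < b) (hγ₁ : ContDiffOn ℝ 2 γ₁ (Icc a b))
    (hγ₂ : ContDiffOn ℝ 2 γ₂ (Icc a b))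
    (hspeed : ∀ t ∈ Icc a b, derivWithin γ₁ (Icc a b) t ^ 2 + derivWithin γ₂ (Icc a b) t ^ 2 = 1)
    {t : ℝ} (ht : t ∈ Icc a b) (hcurv : ¬(deriv (deriv γ₁) t = 0 ∧ deriv (deriv γ₂) t = 0)) :
    signedCurvature γ₁ γ₂ a b t ≠ 0 := by
  intro hzero
  obtain ⟨hT₁, hT₂⟩ := derivWithin_derivWithin_eq_signedCurvature_mul hab hγ₁ hγ₂ hspeed ht
  rw [hzero, zero_mul] at hT₁ hT₂
  have hvanish : ∀ f : ℝ → ℝ, ContDiffOn ℝ 2 f (Icc a b) →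
      derivWithin (derivWithin f (Icc a b)) (Icc a b) t = 0 → deriv (deriv f) t = 0 :=
    fun f hf hft => by
      by_contra hne
      exact hne ((derivWithin_derivWithin_eq_deriv_deriv hab hf ht
        (differentiableAt_of_deriv_ne_zero hne)).symm.trans hft)
  exact hcurv ⟨hvanish γ₁ hγ₁ (hT₁.trans neg_zero), hvanish γ₂ hγ₂ hT₂⟩

theorem exists_forall_norm_integral_cexp_curve_le (hab : a < b)
    (hγ₁ : ContDiffOn ℝ 2 γ₁ (Icc a b)) (hγ₂ : ContDiffOn ℝ 2 γ₂ (Icc a b))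
    (hspeed : ∀ t ∈ Ioo a b, deriv γ₁ t ^ 2 + deriv γ₂ t ^ 2 = 1)
    (hcurv : ∀ t ∈ Icc a b, ¬(deriv (deriv γ₁) t = 0 ∧ deriv (deriv γ₂) t = 0)) :
    ∃ C > 0, ∀ x y R : ℝ, 1 ≤ R → x ^ 2 + y ^ 2 = R ^ 2 →
      ‖∫ t in a..b, Complex.exp ((x * γ₁ t + y * γ₂ t : ℝ) * Complex.I)‖ ≤
        C * R ^ (-(1 / 2) : ℝ) := by
  have hunit := derivWithin_sq_add_sq_eq_one hab (hγ₁.of_le one_le_two) (hγ₂.of_le one_le_two)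
    hspeed
  obtain ⟨C, hC, hdecay⟩ := IsRotatingPair.exists_forall_norm_integral_cexp_le hab.le
    (continuousOn_signedCurvature hab hγ₁ hγ₂)
    fun t ht => signedCurvature_ne_zero hab hγ₁ hγ₂ hunit ht (hcurv t ht)
  refine ⟨C, hC, fun x y R hR hxy => ?_⟩
  refine hdecay _ _ (fun t => x * γ₁ t + y * γ₂ t) R hR
    ((isRotatingPair_derivWithin hab hγ₁ hγ₂ hunit).rotate x y) (fun t ht => ?_) ?_ fun t ht => ?_
  · linear_combination (x ^ 2 + y ^ 2) * hunit t ht + hxy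
  · exact (continuousOn_const.mul hγ₁.continuousOn).add (continuousOn_const.mul hγ₂.continuousOn)
  · exact ((hasDerivAt_of_contDiffOn_Icc hγ₁ two_ne_zero ht).const_mul x).add
      ((hasDerivAt_of_contDiffOn_Icc hγ₂ two_ne_zero ht).const_mul y)

end PlaneCurve

section FrequencyGaps

variable {s N x y : ℝ}

lemma rpow_sub_one_mul_sub_le (hs : 1 ≤ s) (hy : 0 ≤ y) (hxy : y ≤ x) :
    x ^ (s - 1) * (x - y) ≤ x ^ s - y ^ s := by
  have hsplit : ∀ {z : ℝ}, 0 ≤ z → z ^ s = z ^ (s - 1) * z := fun hz => by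
    rw [← Real.rpow_add_one' hz (by linarith), sub_add_cancel]
  have hmono : y ^ (s - 1) * y ≤ x ^ (s - 1) * y :=
    mul_le_mul_of_nonneg_right (Real.rpow_le_rpow hy hxy (by linarith)) hy
  rw [hsplit hy, hsplit (hy.trans hxy)]
  linarith

lemma rpow_mul_abs_sub_rpow_le (hs : 2 ≤ s) (hN : 0 ≤ N) (hx : N ≤ x) (hy : N ≤ y) :
    N ^ ((s - 2) / 2) * |x - y| ^ ((s + 2) / 2) ≤ |x ^ s - y ^ s| := by
  wlog hxy : y ≤ x generalizing x y
  · rw [abs_sub_comm x, abs_sub_comm (x ^ s)]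
    exact this hy hx (le_of_not_ge hxy)
  have hd : 0 ≤ x - y := sub_nonneg.2 hxy
  have hx0 : 0 ≤ x := hN.trans hx
  calc N ^ ((s - 2) / 2) * |x - y| ^ ((s + 2) / 2)
      = N ^ ((s - 2) / 2) * (x - y) ^ (s / 2) * (x - y) := by
        rw [abs_of_nonneg hd, mul_assoc, ← Real.rpow_add_one' hd (by linarith)]
        ring_nf
    _ ≤ x ^ ((s - 2) / 2) * x ^ (s / 2) * (x - y) := by
        gcongr
        linarith
    _ = x ^ (s - 1) * (x - y) := by
        rw [← Real.rpow_add_of_nonneg hx0 (by linarith) (by linarith)]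
        ring_nf
    _ ≤ x ^ s - y ^ s := rpow_sub_one_mul_sub_le (by linarith) (hN.trans hy) hxy
    _ ≤ |x ^ s - y ^ s| := le_abs_self _

/-- The majorant of `R ^ (-1/2)`, where `R` is the distance between the frequencies
`(|k| ^ s, k)` and `(|l| ^ s, l)`, `k ≠ l`, with `|k|, |l| ≥ N` and `m = |k| - |l|`. The first
summand vanishes at `m = 0` because `0 ^ x = 0` for `x ≠ 0`; the second one accounts for
`l = -k`. -/
noncomputable def gapWeight (s N : ℝ) (m : ℤ) : ℝ :=
  N ^ (-((s - 2) / 4)) * |(m : ℝ)| ^ (-((s + 2) / 4)) + if m = 0 then N ^ (-(1 / 2) : ℝ) else 0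

lemma gapWeight_nonneg (hN : 0 ≤ N) (s : ℝ) (m : ℤ) : 0 ≤ gapWeight s N m := by
  unfold gapWeight; split_ifs <;> positivity

lemma gapWeight_neg (s N : ℝ) (m : ℤ) : gapWeight s N (-m) = gapWeight s N m := by
  simp [gapWeight]

lemma gapWeight_abs_sub_abs_le (hN : 0 ≤ N) (s : ℝ) (k l : ℤ) :
    gapWeight s N (|k| - |l|) ≤ gapWeight s N (k - l) + gapWeight s N (k + l) := by
  have hsub := gapWeight_nonneg hN s (k - l)
  have hadd := gapWeight_nonneg hN s (k + l)
  obtain h | h | h | h : |k| - |l| = k - l ∨ |k| - |l| = -(k - l) ∨ |k| - |l| = k + l ∨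
      |k| - |l| = -(k + l) := by grind
  all_goals rw [h]; try rw [gapWeight_neg]
  all_goals linarith

lemma rpow_neg_half_le_gapWeight (hs : 2 ≤ s) (hN : 0 < N) {k l : ℤ} (hk : N ≤ |(k : ℝ)|)
    (hl : N ≤ |(l : ℝ)|) (hkl : k ≠ l) {R : ℝ} (hRpow : |(|(k : ℝ)| ^ s - |(l : ℝ)| ^ s)| ≤ R)
    (hRsub : |(k : ℝ) - l| ≤ R) :
    R ^ (-(1 / 2) : ℝ) ≤ gapWeight s N (|k| - |l|) := by
  have hnonneg : ∀ z : ℝ, 0 ≤ N ^ (-((s - 2) / 4)) * |z| ^ (-((s + 2) / 4)) :=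
    fun z => by positivity
  unfold gapWeight
  split_ifs with hkl_abs
  · have hlk : l = -k := by grind
    have hNR : N ≤ R := by
      calc N ≤ 2 * |(k : ℝ)| := by linarith
        _ = |(k : ℝ) - l| := by
          rw [hlk, Int.cast_neg, sub_neg_eq_add, ← two_mul, abs_mul, abs_two]
        _ ≤ R := hRsub
    exact (Real.rpow_le_rpow_of_nonpos hN hNR (by norm_num)).trans
      (le_add_of_nonneg_left (hnonneg _))
  · push_cast
    set d : ℝ := |(|(k : ℝ)| - |(l : ℝ)|)|
    have hd : 0 < d := abs_pos.2 (by exact_mod_cast hkl_abs)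
    have hdR : N ^ ((s - 2) / 2) * d ^ ((s + 2) / 2) ≤ R :=
      (rpow_mul_abs_sub_rpow_le hs hN.le hk hl).trans hRpow
    calc R ^ (-(1 / 2) : ℝ) ≤ (N ^ ((s - 2) / 2) * d ^ ((s + 2) / 2)) ^ (-(1 / 2) : ℝ) :=
          Real.rpow_le_rpow_of_nonpos (by positivity) hdR (by norm_num)
      _ = N ^ (-((s - 2) / 4)) * d ^ (-((s + 2) / 4)) + 0 := by
          rw [Real.mul_rpow (by positivity) (by positivity), ← Real.rpow_mul hN.le,
            ← Real.rpow_mul hd.le, add_zero]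
          ring_nf

lemma hasSum_gapWeight (hs : 2 < s) (N : ℝ) :
    HasSum (gapWeight s N) (N ^ (-((s - 2) / 4)) * ∑' m : ℤ, |(m : ℝ)| ^ (-((s + 2) / 4)) +
      N ^ (-(1 / 2) : ℝ)) :=
  ((Real.summable_abs_int_rpow (by linarith)).hasSum.mul_left _).add (hasSum_ite_eq 0 _)

lemma tendsto_tsum_gapWeight (hs : 2 < s) :
    Tendsto (fun N => ∑' m, gapWeight s N m) atTop (𝓝 0) := by
  have hlim := ((tendsto_rpow_neg_atTop (y := (s - 2) / 4) (by linarith)).mul_const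
    (∑' m : ℤ, |(m : ℝ)| ^ (-((s + 2) / 4)))).add
      (tendsto_rpow_neg_atTop (y := 1 / 2) (by norm_num))
  simpa only [(hasSum_gapWeight hs _).tsum_eq, zero_mul, zero_add] using hlim

lemma sum_sub_add_sum_add_le_two_mul_tsum {G : Type*} [AddCommGroup G] {f : G → ℝ}
    (hf : Summable f) (hf0 : ∀ m, 0 ≤ f m) (S : Finset G) (k : G) :
    ∑ l ∈ S, (f (k - l) + f (k + l)) ≤ 2 * ∑' m, f m := by
  rw [Finset.sum_add_distrib, two_mul]
  refine add_le_add ?_ ?_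
  · calc ∑ l ∈ S, f (k - l) ≤ ∑' l, f (k - l) :=
          ((Equiv.subLeft k).summable_iff.2 hf).sum_le_tsum S fun _ _ => hf0 _
      _ = ∑' m, f m := (Equiv.subLeft k).tsum_eq f
  · calc ∑ l ∈ S, f (k + l) ≤ ∑' l, f (k + l) :=
          ((Equiv.addLeft k).summable_iff.2 hf).sum_le_tsum S fun _ _ => hf0 _
      _ = ∑' m, f m := (Equiv.addLeft k).tsum_eq f

end FrequencyGaps

section AlmostOrthogonality

open ComplexConjugate

variable {ι : Type*} {S : Finset ι} {B : ι → ι → ℝ} {ε : ℝ}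

lemma schur_test_of_symm (hsymm : ∀ k l, B k l = B l k) (hB : ∀ k l, 0 ≤ B k l)
    (hrow : ∀ k ∈ S, ∑ l ∈ S, B k l ≤ ε) (x : ι → ℝ) :
    ∑ k ∈ S, ∑ l ∈ S, x k * x l * B k l ≤ ε * ∑ k ∈ S, x k ^ 2 := by
  have hswap : ∑ k ∈ S, ∑ l ∈ S, x l ^ 2 * B k l = ∑ k ∈ S, ∑ l ∈ S, x k ^ 2 * B k l := by
    rw [Finset.sum_comm]
    simp only [hsymm]
  calc ∑ k ∈ S, ∑ l ∈ S, x k * x l * B k l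
      ≤ ∑ k ∈ S, ∑ l ∈ S, (x k ^ 2 * B k l + x l ^ 2 * B k l) / 2 :=
        Finset.sum_le_sum fun k _ => Finset.sum_le_sum fun l _ => by
          nlinarith [mul_nonneg (sq_nonneg (x k - x l)) (hB k l)]
    _ = ∑ k ∈ S, ∑ l ∈ S, x k ^ 2 * B k l := by
        simp only [← Finset.sum_div, Finset.sum_add_distrib, hswap]
        ring
    _ ≤ ε * ∑ k ∈ S, x k ^ 2 := by
        rw [Finset.mul_sum]
        refine Finset.sum_le_sum fun k hk => ?_
        rw [← Finset.mul_sum, mul_comm]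
        exact mul_le_mul_of_nonneg_right (hrow k hk) (sq_nonneg _)

lemma norm_sum_sum_mul_conj_mul_le (hsymm : ∀ k l, B k l = B l k) (hB : ∀ k l, 0 ≤ B k l)
    (hrow : ∀ k ∈ S, ∑ l ∈ S, B k l ≤ ε) {M : ι → ι → ℂ}
    (hM : ∀ k ∈ S, ∀ l ∈ S, ‖M k l‖ ≤ B k l) (c : ι → ℂ) :
    ‖∑ k ∈ S, ∑ l ∈ S, c k * conj (c l) * M k l‖ ≤ ε * ∑ k ∈ S, ‖c k‖ ^ 2 :=
  calc ‖∑ k ∈ S, ∑ l ∈ S, c k * conj (c l) * M k l‖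
      ≤ ∑ k ∈ S, ∑ l ∈ S, ‖c k * conj (c l) * M k l‖ :=
        norm_sum_le_of_le _ fun k _ => norm_sum_le _ _
    _ ≤ ∑ k ∈ S, ∑ l ∈ S, ‖c k‖ * ‖c l‖ * B k l := by
        simp only [norm_mul, RCLike.norm_conj]
        gcongr with k hk l hl
        exact hM k hk l hl
    _ ≤ ε * ∑ k ∈ S, ‖c k‖ ^ 2 := schur_test_of_symm hsymm hB hrow fun k => ‖c k‖

variable {a b : ℝ}

lemma integral_norm_sq_sum_eq {f : ι → ℝ → ℂ} (hf : ∀ k ∈ S, ContinuousOn (f k) (uIcc a b))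
    (c : ι → ℂ) :
    ((∫ t in a..b, ‖∑ k ∈ S, c k * f k t‖ ^ 2 : ℝ) : ℂ) =
      ∑ k ∈ S, ∑ l ∈ S, c k * conj (c l) * ∫ t in a..b, f k t * conj (f l t) := by
  have hexpand : ∀ t, ((‖∑ k ∈ S, c k * f k t‖ ^ 2 : ℝ) : ℂ) =
      ∑ k ∈ S, ∑ l ∈ S, c k * conj (c l) * (f k t * conj (f l t)) := fun t => by
    push_cast
    rw [← Complex.mul_conj', map_sum, Finset.sum_mul_sum]
    refine Finset.sum_congr rfl fun k _ => Finset.sum_congr rfl fun l _ => ?_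
    rw [map_mul]
    ring
  have hprod : ∀ k ∈ S, ∀ l ∈ S,
      ContinuousOn (fun t => c k * conj (c l) * (f k t * conj (f l t))) (uIcc a b) :=
    fun k hk l hl => continuousOn_const.mul
      ((hf k hk).mul (Complex.continuous_conj.comp_continuousOn (hf l hl)))
  rw [← intervalIntegral.integral_ofReal]
  simp_rw [hexpand]
  rw [intervalIntegral.integral_finsetSum fun k hk =>
    (continuousOn_finsetSum S fun l hl => hprod k hk l hl).intervalIntegrable]
  refine Finset.sum_congr rfl fun k hk => ?_
  rw [intervalIntegral.integral_finsetSum fun l hl => (hprod k hk l hl).intervalIntegrable]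
  simp_rw [intervalIntegral.integral_const_mul]

lemma cexp_mul_I_mul_conj (x y : ℝ) :
    Complex.exp (x * Complex.I) * conj (Complex.exp (y * Complex.I)) =
      Complex.exp ((x - y : ℝ) * Complex.I) := by
  rw [← Complex.exp_conj, ← Complex.exp_add, map_mul, Complex.conj_ofReal, Complex.conj_I]
  push_cast
  ring_nf

theorem abs_integral_norm_sq_sum_cexp_sub_le {θ : ι → ℝ → ℝ}
    (hθ : ∀ k ∈ S, ContinuousOn (θ k) (uIcc a b)) (hsymm : ∀ k l, B k l = B l k)
    (hB : ∀ k l, 0 ≤ B k l) (hrow : ∀ k ∈ S, ∑ l ∈ S, B k l ≤ ε)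
    (hint : ∀ k ∈ S, ∀ l ∈ S, k ≠ l →
      ‖∫ t in a..b, Complex.exp ((θ k t - θ l t : ℝ) * Complex.I)‖ ≤ B k l)
    (c : ι → ℂ) :
    |(∫ t in a..b, ‖∑ k ∈ S, c k * Complex.exp (θ k t * Complex.I)‖ ^ 2) -
        (b - a) * ∑ k ∈ S, ‖c k‖ ^ 2| ≤ ε * ∑ k ∈ S, ‖c k‖ ^ 2 := by
  classical
  set D : ι → ι → ℂ := fun k l => ∫ t in a..b, Complex.exp ((θ k t - θ l t : ℝ) * Complex.I)
  have hdiag : ∀ k, D k k = (b - a : ℝ) := fun k => by simp [D]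
  have hgram : ((∫ t in a..b, ‖∑ k ∈ S, c k * Complex.exp (θ k t * Complex.I)‖ ^ 2 : ℝ) : ℂ) =
      ∑ k ∈ S, ∑ l ∈ S, c k * conj (c l) * D k l := by
    rw [integral_norm_sq_sum_eq fun k hk => by have := hθ k hk; fun_prop]
    simp only [cexp_mul_I_mul_conj, D]
  have hoffdiag : (((∫ t in a..b, ‖∑ k ∈ S, c k * Complex.exp (θ k t * Complex.I)‖ ^ 2) -
        (b - a) * ∑ k ∈ S, ‖c k‖ ^ 2 : ℝ) : ℂ) =
      ∑ k ∈ S, ∑ l ∈ S, c k * conj (c l) * (D k l - if k = l then ((b - a : ℝ) : ℂ) else 0) := by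
    rw [Complex.ofReal_sub, hgram]
    simp only [mul_sub, Finset.sum_sub_distrib, mul_ite, mul_zero, Finset.sum_ite_eq,
      Complex.mul_conj', Complex.ofReal_mul, Complex.ofReal_sum, Complex.ofReal_pow]
    rw [Finset.mul_sum]
    congr 1
    exact Finset.sum_congr rfl fun k hk => by rw [if_pos hk, mul_comm]
  rw [← Real.norm_eq_abs, ← Complex.norm_real, hoffdiag]
  refine norm_sum_sum_mul_conj_mul_le hsymm hB hrow (fun k hk l hl => ?_) c
  split_ifs with hkl
  · simpa [← hkl, hdiag] using hB k k
  · rw [sub_zero]; exact hint k hk l hl hkl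

end AlmostOrthogonality

section CurveExponentials

/-- The phase at time `t` of the character of frequency `(|k| ^ s, k)` along the curve
`(γ₁, γ₂)`. -/
noncomputable def curvePhase (s : ℝ) (γ₁ γ₂ : ℝ → ℝ) (k : ℤ) (t : ℝ) : ℝ :=
  2 * Real.pi * (|(k : ℝ)| ^ s * γ₁ t + k * γ₂ t)

variable {s a b : ℝ} {γ₁ γ₂ : ℝ → ℝ}

lemma cexp_curvePhase_mul_I (s : ℝ) (γ₁ γ₂ : ℝ → ℝ) (k : ℤ) (t : ℝ) :
    Complex.exp (curvePhase s γ₁ γ₂ k t * Complex.I) =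
      Complex.exp (2 * Real.pi * Complex.I *
        (((|(k : ℝ)| ^ s : ℝ) : ℂ) * (γ₁ t : ℂ) + (k : ℂ) * (γ₂ t : ℂ))) := by
  unfold curvePhase
  push_cast
  ring_nf

lemma norm_integral_cexp_curvePhase_sub_le (hs : 2 ≤ s) {C : ℝ} (hC : 0 ≤ C)
    (hdecay : ∀ x y R : ℝ, 1 ≤ R → x ^ 2 + y ^ 2 = R ^ 2 →
      ‖∫ t in a..b, Complex.exp ((x * γ₁ t + y * γ₂ t : ℝ) * Complex.I)‖ ≤
        C * R ^ (-(1 / 2) : ℝ))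
    {N : ℝ} (hN : 0 < N) {k l : ℤ} (hk : N ≤ |(k : ℝ)|) (hl : N ≤ |(l : ℝ)|) (hkl : k ≠ l) :
    ‖∫ t in a..b, Complex.exp
        ((curvePhase s γ₁ γ₂ k t - curvePhase s γ₁ γ₂ l t : ℝ) * Complex.I)‖ ≤
      C * (gapWeight s N (k - l) + gapWeight s N (k + l)) := by
  set x : ℝ := 2 * Real.pi * (|(k : ℝ)| ^ s - |(l : ℝ)| ^ s)
  set y : ℝ := 2 * Real.pi * (k - l)
  set R : ℝ := √(x ^ 2 + y ^ 2)
  have hscale : ∀ z : ℝ, |z| ≤ |2 * Real.pi * z| := fun z => by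
    rw [abs_mul, abs_of_pos Real.two_pi_pos]
    exact le_mul_of_one_le_left (abs_nonneg z) (by linarith [Real.pi_gt_three])
  have hxR : |(|(k : ℝ)| ^ s - |(l : ℝ)| ^ s)| ≤ R :=
    (hscale _).trans (Real.abs_le_sqrt (le_add_of_nonneg_right (sq_nonneg y)))
  have hyR : |(k : ℝ) - l| ≤ R :=
    (hscale _).trans (Real.abs_le_sqrt (le_add_of_nonneg_left (sq_nonneg x)))
  have hR : 1 ≤ R := by
    have hone : (1 : ℝ) ≤ |(k : ℝ) - l| := by exact_mod_cast Int.one_le_abs (sub_ne_zero.2 hkl)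
    exact hone.trans hyR
  have hphase : ∀ t, curvePhase s γ₁ γ₂ k t - curvePhase s γ₁ γ₂ l t = x * γ₁ t + y * γ₂ t :=
    fun t => by simp only [curvePhase, x, y]; ring
  simp only [hphase]
  calc ‖∫ t in a..b, Complex.exp ((x * γ₁ t + y * γ₂ t : ℝ) * Complex.I)‖
      ≤ C * R ^ (-(1 / 2) : ℝ) := hdecay x y R hR (Real.sq_sqrt (by positivity)).symm
    _ ≤ C * (gapWeight s N (k - l) + gapWeight s N (k + l)) := by
        gcongr
        exact (rpow_neg_half_le_gapWeight hs hN hk hl hkl hxR hyR).trans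
          (gapWeight_abs_sub_abs_le hN.le s k l)

theorem eventually_abs_integral_norm_sq_sum_curvePhase_sub_le (hs : 2 < s) (hab : a < b)
    (hγ₁ : ContDiffOn ℝ 2 γ₁ (Icc a b)) (hγ₂ : ContDiffOn ℝ 2 γ₂ (Icc a b))
    (hspeed : ∀ t ∈ Ioo a b, deriv γ₁ t ^ 2 + deriv γ₂ t ^ 2 = 1)
    (hcurv : ∀ t ∈ Icc a b, ¬(deriv (deriv γ₁) t = 0 ∧ deriv (deriv γ₂) t = 0))
    {ε : ℝ} (hε : 0 < ε) :
    ∀ᶠ N : ℝ in atTop, ∀ (S : Finset ℤ) (c : ℤ → ℂ), (∀ k ∈ S, N ≤ |(k : ℝ)|) →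
      |(∫ t in a..b, ‖∑ k ∈ S, c k * Complex.exp (curvePhase s γ₁ γ₂ k t * Complex.I)‖ ^ 2) -
        (b - a) * ∑ k ∈ S, ‖c k‖ ^ 2| ≤ ε * ∑ k ∈ S, ‖c k‖ ^ 2 := by
  obtain ⟨C, hC, hdecay⟩ :=
    exists_forall_norm_integral_cexp_curve_le hab hγ₁ hγ₂ hspeed hcurv
  have hsmall : ∀ᶠ N : ℝ in atTop, ∑' m, gapWeight s N m < ε / (2 * C) :=
    (tendsto_tsum_gapWeight hs).eventually_lt_const (by positivity)
  filter_upwards [hsmall, eventually_gt_atTop 0] with N hNε hN S c hS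
  refine abs_integral_norm_sq_sum_cexp_sub_le
    (B := fun k l => C * (gapWeight s N (k - l) + gapWeight s N (k + l)))
    (fun k _ => ?_) (fun k l => ?_) (fun k l => ?_) (fun k _ => ?_)
    (fun k hk l hl hkl =>
      norm_integral_cexp_curvePhase_sub_le hs.le hC.le hdecay hN (hS k hk) (hS l hl) hkl) c
  · rw [uIcc_of_le hab.le]
    exact continuousOn_const.mul ((continuousOn_const.mul hγ₁.continuousOn).add
      (continuousOn_const.mul hγ₂.continuousOn))
  · rw [← gapWeight_neg s N (k - l), neg_sub, add_comm k l]
  · exact mul_nonneg hC.le (add_nonneg (gapWeight_nonneg hN.le s _) (gapWeight_nonneg hN.le s _))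
  · calc ∑ l ∈ S, C * (gapWeight s N (k - l) + gapWeight s N (k + l))
        ≤ C * (2 * ∑' m, gapWeight s N m) := by
          rw [← Finset.mul_sum]
          exact mul_le_mul_of_nonneg_left (sum_sub_add_sum_add_le_two_mul_tsum
            (hasSum_gapWeight hs N).summable (gapWeight_nonneg hN.le s) S k) hC.le
      _ ≤ C * (2 * (ε / (2 * C))) := by gcongr
      _ = ε := by field_simp

end CurveExponentials

/-- **High-frequency observability along a unit-speed curve with non-vanishing curvature**
(Theorem `thm:highfreq`). The curve is `γ = (γ₁, γ₂) : [0,L] → ℝ²`, of class `C²`,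
unit speed (`γ₁'(t)² + γ₂'(t)² = 1`) and with nowhere-vanishing curvature
(`γ''(t) ≠ 0`), and `σ` is the normalized arc-length measure, so that
`∫_Γ f dσ = (1/L) ∫₀^L f(γ(t)) dt`. -/
theorem highfreq_curve
    (s : ℝ) (hs : 2 < s) (L : ℝ) (hL : 0 < L)
    (γ₁ γ₂ : ℝ → ℝ)
    (hγ₁ : ContDiffOn ℝ 2 γ₁ (Set.Icc 0 L)) (hγ₂ : ContDiffOn ℝ 2 γ₂ (Set.Icc 0 L))
    (hspeed : ∀ t ∈ Set.Icc (0:ℝ) L, (deriv γ₁ t) ^ 2 + (deriv γ₂ t) ^ 2 = 1)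
    (hcurv : ∀ t ∈ Set.Icc (0:ℝ) L,
      ¬(deriv (deriv γ₁) t = 0 ∧ deriv (deriv γ₂) t = 0)) :
    ∃ N₀ : ℕ, ∀ N : ℕ, N₀ ≤ N →
      ∀ c : ℤ → ℂ, {k : ℤ | c k ≠ 0}.Finite →
        (∀ k : ℤ, |k| < (N : ℤ) → c k = 0) →
        (1 / 2) * (∑' k : ℤ, ‖c k‖ ^ 2) ≤
          (1 / L) * (∫ t in (0:ℝ)..L,
            ‖∑' k : ℤ, c k * Complex.exp (2 * Real.pi * Complex.I *
              (((|(k : ℝ)| ^ s : ℝ) : ℂ) * (γ₁ t : ℂ) + (k : ℂ) * (γ₂ t : ℂ)))‖ ^ 2) ∧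
        (1 / L) * (∫ t in (0:ℝ)..L,
            ‖∑' k : ℤ, c k * Complex.exp (2 * Real.pi * Complex.I *
              (((|(k : ℝ)| ^ s : ℝ) : ℂ) * (γ₁ t : ℂ) + (k : ℂ) * (γ₂ t : ℂ)))‖ ^ 2) ≤
          (3 / 2) * (∑' k : ℤ, ‖c k‖ ^ 2) := by
  obtain ⟨N₀, hN₀⟩ := eventually_atTop.1 (tendsto_natCast_atTop_atTop.eventually
    (eventually_abs_integral_norm_sq_sum_curvePhase_sub_le hs hL hγ₁ hγ₂
      (fun t ht => hspeed t (Ioo_subset_Icc_self ht)) hcurv (half_pos hL)))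
  refine ⟨N₀, fun N hN c hfin hc => ?_⟩
  set S : Finset ℤ := hfin.toFinset
  have hzero : ∀ k ∉ S, c k = 0 := fun k hk => by simpa [S] using hk
  have hlarge : ∀ k ∈ S, (N : ℝ) ≤ |(k : ℝ)| := fun k hk => by
    have hNk : (N : ℤ) ≤ |k| := not_lt.1 fun hlt => hfin.mem_toFinset.1 hk (hc k hlt)
    exact_mod_cast hNk
  have hclose := abs_le.1 (hN₀ N hN S c hlarge)
  have hcoeff : ∑' k : ℤ, ‖c k‖ ^ 2 = ∑ k ∈ S, ‖c k‖ ^ 2 :=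
    tsum_eq_sum fun k hk => by simp [hzero k hk]
  have hseries : ∀ t, ∑' k : ℤ, c k * Complex.exp (curvePhase s γ₁ γ₂ k t * Complex.I) =
      ∑ k ∈ S, c k * Complex.exp (curvePhase s γ₁ γ₂ k t * Complex.I) := fun t =>
    tsum_eq_sum fun k hk => by simp [hzero k hk]
  simp only [← cexp_curvePhase_mul_I, hseries, hcoeff, one_div_mul_eq_div, le_div_iff₀ hL,
    div_le_iff₀ hL]
  constructor <;> linarith
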